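/- arXiv:2110.09339 — 2 statements merged into one kernel-verified Lean document; each statement's English description precedes it below -/
import Mathlib

section
/- Let K ≥ 1 and let v : ℤ → ℝ be a K-periodic potential taking only integer values, with monodromy matrix M := T(K−1)·⋯·T(1)·T(0). If |tr(M)| > 2, then: (a) every bounded function x : ℕ → ℂ satisfying x(1) + v(0)·x(0) = 0 and x(k+1) + x(k−1) + v(k)·x(k) = 0 for all k ≥ 1 is identically zero; and (b) every bounded function y : ℤ → ℂ satisfying y(−1) + v(0)·y(0) = 0, y(k+1) + y(k−1) + v(k)·y(k) = 0 for all k ≤ −1, and y(k) = 0 for k ≥ 1, is identically zero. That is, both one-sided compressions H₊ and H₋ are injective on the bounded sequences. -/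
/-!
A solution of either half-line recursion is determined by its value `c` at site `0`, and since the
potential is integer-valued every value of the solution is an integer multiple of `c`
(`exists_int_multiple`). Cayley–Hamilton for the monodromy matrix, which has determinant `1`, shows
that the samples `a n` of the solution at the multiples of the period, taken outwards from `0`,
satisfy `a (n + 2) = t * a (n + 1) - a n` with `t = tr M` (`sample_recurrence`); this recurrence is
the same in both directions.

For `|t| > 2`, once `‖a (n + 1)‖ ≥ ‖a n‖` with `a (n + 1) ≠ 0`, the samples grow geometrically. So
for a bounded solution `‖a n‖` decreases strictly as long as it is nonzero. If `c ≠ 0`, then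
`‖a n‖ / ‖c‖` is a natural number, so the decrease has to reach `0`; two consecutive zeros then
propagate back to `a 0 = c`, a contradiction (`eq_zero_of_bounded_recurrence`). Integrality thus
excludes that the initial vector lies on the contracting eigendirection of `M`.
-/

noncomputable section

open Matrix

/-- The transfer matrix at energy `0`: `T(n) = !![-v n, -1; 1, 0]`. -/
def transfer0 (v : ℤ → ℝ) (n : ℤ) : Matrix (Fin 2) (Fin 2) ℝ :=
  !![-v n, -1; 1, 0]

/-- The monodromy matrix `M = T(K-1) ⋯ T(1) T(0)` at energy `0`. -/
def monodromy0 (v : ℤ → ℝ) (K : ℕ) : Matrix (Fin 2) (Fin 2) ℝ :=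
  (((List.range K).map fun i => transfer0 v (i : ℤ)).reverse).prod

/-- Along `a (n + 2) = t * a (n + 1) - a n` with `|t| > 2`, one non-decreasing step into a nonzero
value forces geometric growth with ratio `|t| - 1 > 1`, which boundedness excludes. -/
lemma decrease_of_bounded (a : ℕ → ℂ) (t C : ℝ) (ht : 2 < |t|)
    (hC : ∀ n, ‖a n‖ ≤ C)
    (hrec : ∀ n, a (n + 2) = (t : ℂ) * a (n + 1) - a n) (n : ℕ) (hne : a (n + 1) ≠ 0) :
    ‖a (n + 1)‖ < ‖a n‖ := by
  by_contra! hle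
  have hpos : 0 < ‖a (n + 1)‖ := norm_pos_iff.mpr hne
  have key : ∀ j : ℕ, ‖a (n + j)‖ ≤ ‖a (n + j + 1)‖ ∧
      (|t| - 1) ^ j * ‖a (n + 1)‖ ≤ ‖a (n + j + 1)‖ := by
    intro j
    induction j with
    | zero => simpa using hle
    | succ j ih =>
      obtain ⟨h1, h2⟩ := ih
      have h3 : |t| * ‖a (n + j + 1)‖ - ‖a (n + j)‖ ≤ ‖a (n + j + 2)‖ := by
        rw [hrec (n + j)]
        have := norm_sub_norm_le ((t : ℂ) * a (n + j + 1)) (a (n + j))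
        rwa [norm_mul, Complex.norm_real, Real.norm_eq_abs] at this
      have h0 := norm_nonneg (a (n + j + 1))
      have h4 : (|t| - 1) * ‖a (n + j + 1)‖ ≤ ‖a (n + j + 2)‖ := by linarith
      refine ⟨?_, ?_⟩
      · change ‖a (n + j + 1)‖ ≤ ‖a (n + j + 2)‖
        nlinarith
      · change (|t| - 1) ^ (j + 1) * ‖a (n + 1)‖ ≤ ‖a (n + j + 2)‖
        have h5 : (|t| - 1) * ((|t| - 1) ^ j * ‖a (n + 1)‖) ≤ (|t| - 1) * ‖a (n + j + 1)‖ :=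
          mul_le_mul_of_nonneg_left h2 (by linarith)
        rw [pow_succ']
        linarith
  obtain ⟨j, hj⟩ := pow_unbounded_of_one_lt (C / ‖a (n + 1)‖) (by linarith : 1 < |t| - 1)
  rw [div_lt_iff₀ hpos] at hj
  linarith [(key j).2, hC (n + j + 1)]

lemma eq_zero_of_bounded_recurrence (a : ℕ → ℂ) (t C : ℝ) (ht : 2 < |t|)
    (hC : ∀ n, ‖a n‖ ≤ C)
    (hrec : ∀ n, a (n + 2) = (t : ℂ) * a (n + 1) - a n)
    (hint : ∀ n, ∃ m : ℤ, a n = a 0 * (m : ℂ)) : a 0 = 0 := by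
  by_contra h0
  have hdec := decrease_of_bounded a t C ht hC hrec
  choose m hm using hint
  have hpos : 0 < ‖a 0‖ := norm_pos_iff.mpr h0
  have hnorm : ∀ n, ‖a n‖ = ‖a 0‖ * ((m n).natAbs : ℝ) := by
    intro n
    conv_lhs => rw [hm n]
    rw [norm_mul, Complex.norm_intCast, Nat.cast_natAbs, Int.cast_abs]
  -- Infinite descent: a nonzero tail would make `(m n).natAbs` strictly decreasing.
  have hzero : ∃ n, a (n + 1) = 0 := by
    by_contra! hne
    have hlt : ∀ n, (m (n + 1)).natAbs < (m n).natAbs := by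
      intro n
      have h := hdec n (hne n)
      rw [hnorm (n + 1), hnorm n] at h
      exact_mod_cast lt_of_mul_lt_mul_left h hpos.le
    have hsum : ∀ n, (m n).natAbs + n ≤ (m 0).natAbs := by
      intro n
      induction n with
      | zero => simp
      | succ n ih => have := hlt n; omega
    have := hsum ((m 0).natAbs + 1)
    omega
  obtain ⟨N, hN⟩ := hzero
  have hN' : a (N + 2) = 0 := by
    by_contra hne
    have h := hdec (N + 1) hne
    rw [hN, norm_zero] at h
    exact absurd h (not_lt.mpr (norm_nonneg _))
  -- The recurrence is reversible: two consecutive zeros propagate down to index `0`.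
  have hback : ∀ n, a (n + 1) = 0 → a (n + 2) = 0 → a 0 = 0 := by
    intro n
    induction n with
    | zero =>
      intro h1 h2
      have h := hrec 0
      simp only [zero_add] at h h1 h2
      rw [h1, h2] at h
      simpa using h.symm
    | succ n ih =>
      intro h1 h2
      have h := hrec (n + 1)
      rw [show n + 1 + 2 = n + 3 from rfl, show n + 1 + 1 = n + 2 from rfl] at *
      rw [h1, h2] at h
      exact ih (by simpa using h.symm) h1
  exact h0 (hback N hN hN')

lemma exists_int_multiple (z : ℕ → ℂ) (w : ℕ → ℝ) (hw : ∀ n, ∃ m : ℤ, w n = (m : ℝ))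
    (h0 : z 1 + (w 0 : ℂ) * z 0 = 0)
    (h : ∀ k, z (k + 2) + z k + (w (k + 1) : ℂ) * z (k + 1) = 0) (n : ℕ) :
    ∃ m : ℤ, z n = z 0 * (m : ℂ) := by
  choose p hp using hw
  have hp' : ∀ n, (w n : ℂ) = (p n : ℂ) := fun n => by rw [hp n]; simp
  suffices H : (∃ m : ℤ, z n = z 0 * (m : ℂ)) ∧ ∃ m : ℤ, z (n + 1) = z 0 * (m : ℂ) from H.1
  induction n with
  | zero =>
    refine ⟨⟨1, by simp⟩, ⟨-p 0, ?_⟩⟩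
    rw [hp'] at h0
    push_cast
    linear_combination h0
  | succ n ih =>
    obtain ⟨⟨m₁, h₁⟩, m₂, h₂⟩ := ih
    refine ⟨⟨m₂, h₂⟩, ⟨-m₁ - p (n + 1) * m₂, ?_⟩⟩
    have h3 := h n
    rw [hp', h₁, h₂] at h3
    push_cast
    linear_combination h3

lemma monodromy0_succ (v : ℤ → ℝ) (n : ℕ) :
    monodromy0 v (n + 1) = transfer0 v n * monodromy0 v n := by
  simp [monodromy0, List.range_succ]

lemma det_monodromy0 (v : ℤ → ℝ) (n : ℕ) : (monodromy0 v n).det = 1 := by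
  induction n with
  | zero => simp [monodromy0]
  | succ n ih => rw [monodromy0_succ, det_mul, ih]; simp [transfer0, det_fin_two]

/-- The monodromy matrix propagates `(f s, f (s - 1))` over `n` sites, provided the potential seen
from `s` agrees with the potential seen from `0`. -/
lemma propagate (v : ℤ → ℝ) (f : ℤ → ℂ) (s : ℤ) (hs : ∀ j : ℤ, v (s + j) = v j) (n : ℕ)
    (h : ∀ j : ℕ, j < n → f (s + j + 1) + f (s + j - 1) + (v (s + j) : ℂ) * f (s + j) = 0) :
    f (s + n) = (monodromy0 v n 0 0 : ℂ) * f s + (monodromy0 v n 0 1 : ℂ) * f (s - 1) ∧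
    f (s + n - 1) = (monodromy0 v n 1 0 : ℂ) * f s + (monodromy0 v n 1 1 : ℂ) * f (s - 1) := by
  induction n with
  | zero => simp [monodromy0]
  | succ n ih =>
    obtain ⟨h1, h2⟩ := ih fun j hj => h j (by omega)
    have h3 := h n (by omega)
    rw [hs, h1, h2] at h3
    rw [monodromy0_succ]
    simp only [transfer0, mul_apply, Fin.sum_univ_two, of_apply, cons_val', cons_val_zero,
      cons_val_one, cons_val_fin_one]
    push_cast
    constructor
    · rw [← add_assoc]
      linear_combination h3
    · rw [show s + ((n : ℤ) + 1) - 1 = s + n by ring, h1]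
      ring

/-- Cayley–Hamilton for the monodromy matrix, read off in the first coordinate. -/
lemma sample_recurrence (K : ℕ) (v : ℤ → ℝ) (hper : ∀ n : ℤ, v (n + (K : ℤ)) = v n)
    (f : ℤ → ℂ) (q : ℤ)
    (h : ∀ k : ℤ, q * K ≤ k → k < (q + 2) * K → f (k + 1) + f (k - 1) + (v k : ℂ) * f k = 0) :
    f ((q + 2) * K) = ((monodromy0 v K).trace : ℂ) * f ((q + 1) * K) - f (q * K) := by
  have hs : ∀ q j : ℤ, v (q * K + j) = v j := by
    intro q j
    have hp : Function.Periodic v (K : ℤ) := hper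
    rw [add_comm]
    exact hp.int_mul q j
  obtain ⟨h1, h2⟩ := propagate v f (q * K) (hs q) K fun j hj =>
    h _ (by linarith) (by have : (j : ℤ) < K := by exact_mod_cast hj
                          linarith)
  obtain ⟨h3, -⟩ := propagate v f ((q + 1) * K) (hs (q + 1)) K fun j hj =>
    h _ (by linarith) (by have : (j : ℤ) < K := by exact_mod_cast hj
                          linarith)
  have hdet : (monodromy0 v K 0 0 : ℂ) * (monodromy0 v K 1 1 : ℂ)
      - (monodromy0 v K 0 1 : ℂ) * (monodromy0 v K 1 0 : ℂ) = 1 := by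
    have := det_monodromy0 v K
    rw [det_fin_two] at this
    exact_mod_cast this
  rw [show q * (K : ℤ) + K = (q + 1) * K by ring] at h1 h2
  rw [show (q + 1) * (K : ℤ) + K = (q + 2) * K by ring] at h3
  rw [trace_fin_two]
  push_cast
  linear_combination h3 + (monodromy0 v K 0 1 : ℂ) * h2 - (monodromy0 v K 1 1 : ℂ) * h1
    - f (q * K) * hdet

/-- for an invertible `K`-periodic Schrödinger operator with
integer-valued potential, both one-sided compressions `H₊` and `H₋` are injective
on the bounded sequences. -/
theorem stmt15 (K : ℕ) (hK : 1 ≤ K) (v : ℤ → ℝ)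
    (hper : ∀ n : ℤ, v (n + (K : ℤ)) = v n)
    (hint : ∀ n : ℤ, ∃ m : ℤ, v n = (m : ℝ))
    (htr : 2 < |Matrix.trace (monodromy0 v K)|) :
    (∀ x : ℕ → ℂ, (∃ C : ℝ, ∀ k : ℕ, ‖x k‖ ≤ C) →
      x 1 + (v 0 : ℂ) * x 0 = 0 →
      (∀ k : ℕ, x (k + 2) + x k + (v ((k : ℤ) + 1) : ℂ) * x (k + 1) = 0) →
      x = 0) ∧
    (∀ y : ℤ → ℂ, (∃ C : ℝ, ∀ k : ℤ, ‖y k‖ ≤ C) →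
      y (-1) + (v 0 : ℂ) * y 0 = 0 →
      (∀ k : ℤ, k ≤ -1 → y (k + 1) + y (k - 1) + (v k : ℂ) * y k = 0) →
      (∀ k : ℤ, 1 ≤ k → y k = 0) →
      y = 0) := by
  constructor
  · rintro x ⟨C, hC⟩ h0 h
    have hmul := exists_int_multiple x (fun n => v n) (fun n => hint n) (by simpa using h0)
      (fun k => by simpa using h k)
    have hx0 : x 0 = 0 := by
      -- Extension of `x` by `0` to the negative sites, in accordance with `x (-1) = 0`.
      let f : ℤ → ℂ := fun k => if k < 0 then 0 else x k.toNat
      have hf : ∀ n : ℕ, f n = x n := fun n => by simp [f]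
      have hfrec : ∀ k : ℤ, 0 ≤ k → f (k + 1) + f (k - 1) + (v k : ℂ) * f k = 0 := by
        intro k hk
        obtain ⟨n, rfl⟩ := Int.eq_ofNat_of_zero_le hk
        cases n with
        | zero => simpa [f] using h0
        | succ n =>
          have e1 := hf (n + 2)
          have e2 := hf (n + 1)
          have e3 := hf n
          have e4 := h n
          push_cast at e1 e2 e3 ⊢
          rw [show (n : ℤ) + 1 + 1 = n + 2 by ring, show (n : ℤ) + 1 - 1 = n by ring, e1, e2, e3]
          exact e4
      have := eq_zero_of_bounded_recurrence (fun n => x (n * K)) _ C htr (fun n => hC _)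
        (fun n => by
          have e := sample_recurrence K v hper f n fun k hk _ => hfrec k ((by positivity : (0 : ℤ) ≤ n * K).trans hk)
          have e1 := hf ((n + 2) * K)
          have e2 := hf ((n + 1) * K)
          have e3 := hf (n * K)
          push_cast at e1 e2 e3
          rwa [e1, e2, e3] at e)
        (fun n => by simpa using hmul (n * K))
      simpa using this
    funext n
    obtain ⟨m, hm⟩ := hmul n
    simp [hm, hx0]
  · rintro y ⟨C, hC⟩ h0 h hy
    have hmul := exists_int_multiple (fun n => y (-n)) (fun n => v (-n)) (fun n => hint _)
      (by simpa using h0)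
      (fun k => by
        have e := h (-((k : ℤ) + 1)) (by omega)
        rw [show -((k : ℤ) + 1) + 1 = -k by ring,
          show -((k : ℤ) + 1) - 1 = -(k + 2) by ring] at e
        push_cast
        linear_combination e)
    have hy0 : y 0 = 0 := by
      have := eq_zero_of_bounded_recurrence (fun n => y (-n * K)) _ C htr (fun n => hC _)
        (fun n => by
          have e := sample_recurrence K v hper y (-((n : ℤ) + 2)) fun k _ hk => h k (by
            have : 0 ≤ (n : ℤ) * K := by positivity
            rw [show (-((n : ℤ) + 2) + 2) * K = -(n * K) by ring] at hk
            omega)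
          rw [show -((n : ℤ) + 2) + 2 = -n by ring,
            show -((n : ℤ) + 2) + 1 = -(n + 1) by ring] at e
          push_cast
          linear_combination e)
        (fun n => by
          have e := hmul (n * K)
          simpa using e)
      simpa using this
    funext k
    rcases le_or_gt 1 k with hk | hk
    · exact hy k hk
    · obtain ⟨m, hm⟩ := hmul (-k).toNat
      have hk' : -(((-k).toNat : ℕ) : ℤ) = k := by omega
      simp only [hk'] at hm
      simp [hm, hy0]
end
end

section
/- Let v : ℤ → ℝ be the 5-periodic potential with (v(0), v(1), v(2), v(3), v(4)) = (1/√2, 1/√2, 0, 1/√2, 0) (extended by v(n+5) = v(n)), and let H be the discrete Schrödinger operator on ℓ²(ℤ) with potential v. Then H is bijective, but the finite section method is not applicable to H; i.e. the finite sections (Hₙ) are not stable. In particular, H is not FSM-simple, showing that Theorem 1.1(b) fails for irrational coupling constants λ. -/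
/-!
Let `a = 1/√2`, so that `a² = 1/2`. The transfer matrix of `H x = 0` over the period starting at
`0` is upper triangular with diagonal `(-a, -2a)`. Its trace `-3a` exceeds `2` in absolute value,
so `0` is not in the spectrum of `H`; yet its first eigenvector `(x₀, x₋₁) = (1, 0)` belongs to the
eigenvalue `-a` of modulus less than one, so the compression of `H` to the half line `n ≥ 0` has an
exponentially decaying kernel vector.

*Bijectivity.* Solving `H x = f` forwards and backwards over one period gives a bounded banded
operator `B` with `B H = H B = U + U⁻¹ + 3a`, where `U` is translation by `5`
(`bijective_of_periodic`; the constant is the period-independent trace, `trace_eq`). The right-hand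
side is invertible by a Neumann series because `3a > 2` (`isUnit_disc`). Existence of a right and of
a left factorization of an invertible operator makes `H` bijective.

*Instability.* The section of size `10m + 1` has its upper left corner at `-5m`, a multiple of the
period, so it sees the potential from `v 0` on. Applied to the kernel vector of the half-line
operator it leaves only the last coordinate (`schFinSec_mulVec`), of modulus `a ^ (2m + 1)`
(`schSol_period`), whereas the vector has norm at least `1`. Hence the inverse, if it exists, has
norm at least `a ^ (-(2m + 1))`.
-/

noncomputable section

open Matrix

/-- The `n`-th (two-sided) finite section of the discrete Schrödinger operator with
potential `v`. -/
def schFinSec (v : ℤ → ℝ) (n : ℕ) : Matrix (Fin (2 * n + 1)) (Fin (2 * n + 1)) ℂ :=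
  Matrix.of fun i j =>
    if (i : ℤ) = (j : ℤ) then ((v ((i : ℤ) - (n : ℤ))) : ℂ)
    else if (i : ℤ) = (j : ℤ) + 1 ∨ (j : ℤ) = (i : ℤ) + 1 then 1 else 0

/-- The complex Hilbert space `ℓ²(ℤ)`. -/
abbrev ellTwo : Type := lp (fun _ : ℤ => ℂ) 2

/-! ### Translations of `ℓ²(ℤ)` and the invertible operator `U + U⁻¹ + 3/√2` -/

lemma summable_norm_sq (x : ellTwo) : Summable fun n : ℤ => ‖x n‖ ^ (2 : ENNReal).toReal :=
  (memℓp_gen_iff (by norm_num)).1 (lp.memℓp x)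

/-- Translation by `k` as a linear map on `ℓ²(ℤ)`: `(S x)ₙ = xₙ₊ₖ`. -/
def shiftLin (k : ℤ) : ellTwo →ₗ[ℂ] ellTwo where
  toFun x := ⟨fun n => x (n + k), memℓp_gen
    ((Equiv.addRight k).summable_iff.2 (summable_norm_sq x))⟩
  map_add' _ _ := by ext n; rfl
  map_smul' _ _ := by ext n; rfl

lemma shiftLin_norm (k : ℤ) (x : ellTwo) : ‖shiftLin k x‖ = ‖x‖ := by
  rw [lp.norm_eq_tsum_rpow (by norm_num), lp.norm_eq_tsum_rpow (by norm_num)]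
  congr 1
  exact (Equiv.addRight k).tsum_eq (fun n : ℤ => ‖x n‖ ^ (2 : ENNReal).toReal)

/-- Translation by `k` as a bounded operator on `ℓ²(ℤ)`: `(S x)ₙ = xₙ₊ₖ`. -/
def shift (k : ℤ) : ellTwo →L[ℂ] ellTwo :=
  (shiftLin k).mkContinuous 1 fun x => by rw [shiftLin_norm, one_mul]

@[simp] lemma shift_apply (k : ℤ) (x : ellTwo) (n : ℤ) : shift k x n = x (n + k) := rfl

lemma shift_norm_le (k : ℤ) : ‖shift k‖ ≤ 1 :=
  LinearMap.mkContinuous_norm_le _ zero_le_one _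

/-- A Neumann series: `‖U + U⁻¹‖ ≤ 2 < 3/√2` for the translation `U` by one period. -/
lemma isUnit_disc (a : ℝ) (ha : 2 < 3 * a) :
    IsUnit (shift 5 + shift (-5) + (3 * a : ℂ) • (1 : ellTwo →L[ℂ] ellTwo)) := by
  have hne : (3 * a : ℂ) ≠ 0 := by exact_mod_cast (by linarith : (3 * a : ℝ) ≠ 0)
  have hn : ‖(3 * a : ℂ)‖ = 3 * a := by
    have : (3 * a : ℂ) = ((3 * a : ℝ) : ℂ) := by push_cast; ring
    rw [this, Complex.norm_real, Real.norm_of_nonneg (by linarith)]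
  have key : IsUnit (1 - (-(3 * a : ℂ)⁻¹) • (shift 5 + shift (-5))) := by
    apply isUnit_one_sub_of_norm_lt_one
    rw [norm_smul, norm_neg, norm_inv, hn]
    have h2 : ‖shift 5 + shift (-5)‖ ≤ 2 := by
      have := norm_add_le (shift 5) (shift (-5))
      linarith [shift_norm_le 5, shift_norm_le (-5)]
    rw [inv_mul_lt_iff₀ (by linarith)]
    linarith
  have : shift 5 + shift (-5) + (3 * a : ℂ) • (1 : ellTwo →L[ℂ] ellTwo) =
      Units.mk0 (3 * a : ℂ) hne • (1 - (-(3 * a : ℂ)⁻¹) • (shift 5 + shift (-5))) := by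
    rw [Units.smul_def, Units.val_mk0, smul_sub, smul_smul, mul_neg, mul_inv_cancel₀ hne,
      neg_smul, one_smul, sub_neg_eq_add, add_comm]
  rw [this]
  exact key.smul _

/-! ### Bijectivity of the periodic operator -/

/-- The trace of the transfer matrix over one period is `-3a` at every starting point. The left-hand
side is minus this trace, which is invariant under cyclic permutations of the period. -/
lemma trace_eq (v : ℤ → ℝ) (a : ℂ)
    (hper : ∀ n : ℤ, v (n + 5) = v n)
    (h0 : (v 0 : ℂ) = a) (h1 : (v 1 : ℂ) = a) (h2 : v 2 = 0)
    (h3 : (v 3 : ℂ) = a) (h4 : v 4 = 0) (n : ℤ) :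
    (v n * v (n + 1) * v (n + 2) * v (n + 3) * v (n + 4)
      - v n * v (n + 1) * v (n + 2) - v (n + 1) * v (n + 2) * v (n + 3)
      - v (n + 2) * v (n + 3) * v (n + 4) - v (n + 3) * v (n + 4) * v n
      - v (n + 4) * v n * v (n + 1)
      + v n + v (n + 1) + v (n + 2) + v (n + 3) + v (n + 4) : ℂ) = 3 * a := by
  have hmod : ∀ m : ℤ, v m = v (m % 5) := fun m => by
    have hp : Function.Periodic v 5 := hper
    conv_lhs => rw [← Int.emod_add_mul_ediv m 5, mul_comm]
    exact hp.int_mul (m / 5) (m % 5)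
  have hr : n % 5 = 0 ∨ n % 5 = 1 ∨ n % 5 = 2 ∨ n % 5 = 3 ∨ n % 5 = 4 := by omega
  rw [hmod n, hmod (n + 1), hmod (n + 2), hmod (n + 3), hmod (n + 4)]
  rcases hr with h | h | h | h | h <;>
    · simp only [Int.add_emod n, h]
      norm_num [h0, h1, h2, h3, h4]
      try ring

lemma bijective_of_periodic (v : ℤ → ℝ) (a : ℝ) (ha3 : 2 < 3 * a)
    (hper : ∀ n : ℤ, v (n + 5) = v n)
    (h0 : v 0 = a) (h1 : v 1 = a) (h2 : v 2 = 0) (h3 : v 3 = a) (h4 : v 4 = 0)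
    (H : ellTwo →L[ℂ] ellTwo)
    (hH : ∀ x : ellTwo, ∀ n : ℤ, H x n = x (n + 1) + x (n - 1) + (v n : ℂ) * x n) :
    Function.Bijective H := by
  -- Multiplication by the translated potential, obtained from `H` by removing the hopping terms.
  let M : ℤ → ellTwo →L[ℂ] ellTwo := fun k =>
    shift k * (H - shift 1 - shift (-1)) * shift (-k)
  have hM : ∀ k x n, M k x n = (v (n + k) : ℂ) * x n := fun k x n => by
    simp only [M, mul_apply_eq_comp, shift_apply, _root_.sub_apply,
      lp.coeFn_sub, Pi.sub_apply, hH, add_sub_assoc, add_assoc]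
    norm_num
    ring_nf
  -- The coefficients come from solving `H x = f` forwards and backwards over one period.
  let B : ellTwo →L[ℂ] ellTwo :=
    shift 4 - M 4 * shift 3 + M 4 * (M 3 * shift 2) - shift 2
      - M 4 * (M 3 * (M 2 * shift 1)) + M 4 * shift 1 + M 2 * shift 1
      + M 1 * (M 2 * (M 3 * M 4)) - M 3 * M 4 - M 1 * M 4 - M 1 * M 2 + 1
      + shift (-4) - M 1 * shift (-3) + M 1 * (M 2 * shift (-2)) - shift (-2)
      - M 1 * (M 2 * (M 3 * shift (-1))) + M 1 * shift (-1) + M 3 * shift (-1)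
  let D : ellTwo →L[ℂ] ellTwo :=
    shift 5 + shift (-5) + (3 * a : ℂ) • (1 : ellTwo →L[ℂ] ellTwo)
  have hB : ∀ x n, B x n =
      x (n + 4) - v (n + 4) * x (n + 3) + v (n + 4) * (v (n + 3) * x (n + 2)) - x (n + 2)
      - v (n + 4) * (v (n + 3) * (v (n + 2) * x (n + 1))) + v (n + 4) * x (n + 1)
      + v (n + 2) * x (n + 1)
      + v (n + 1) * (v (n + 2) * (v (n + 3) * (v (n + 4) * x n)))
      - v (n + 3) * (v (n + 4) * x n) - v (n + 1) * (v (n + 4) * x n)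
      - v (n + 1) * (v (n + 2) * x n) + x n
      + x (n + -4) - v (n + 1) * x (n + -3) + v (n + 1) * (v (n + 2) * x (n + -2))
      - x (n + -2)
      - v (n + 1) * (v (n + 2) * (v (n + 3) * x (n + -1))) + v (n + 1) * x (n + -1)
      + v (n + 3) * x (n + -1) := fun x n => by
    simp only [B, mul_apply_eq_comp, _root_.add_apply,
      _root_.sub_apply, lp.coeFn_sub, lp.coeFn_add, Pi.sub_apply, Pi.add_apply,
      hM, shift_apply, one_apply_eq_self]
  have hD : ∀ x n, D x n = x (n + 5) + x (n + -5) + 3 * a * x n := fun x n => by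
    simp only [D, _root_.add_apply, _root_.smul_apply, lp.coeFn_add, Pi.add_apply, lp.coeFn_smul,
      Pi.smul_apply, shift_apply, one_apply_eq_self, smul_eq_mul]
  have htr := trace_eq v a hper (by rw [h0]) (by rw [h1]) h2 (by rw [h3]) h4
  have hDu : IsUnit D := isUnit_disc a ha3
  have hDb : Function.Bijective D := by
    obtain ⟨u, hu⟩ := hDu
    rw [← hu]
    exact (ContinuousLinearEquiv.ofUnit u).bijective
  have hv : ∀ n, v (n + -1) = v (n + 4) ∧ v (n + -2) = v (n + 3) ∧ v (n + -3) = v (n + 2) ∧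
      v (n + -4) = v (n + 1) ∧ v (n + 5) = v n := fun n => by
    refine ⟨?_, ?_, ?_, ?_, hper n⟩ <;> · rw [← hper]; congr 1; ring
  have hBH : ∀ x, B (H x) = D x := fun x => by
    ext n
    obtain ⟨e1, e2, e3, e4, e5⟩ := hv n
    rw [hB, hD, ← htr n]
    simp only [hH, sub_eq_add_neg, add_assoc]
    norm_num [e1, e2, e3, e4, e5]
    ring
  have hHB : ∀ x, H (B x) = D x := fun x => by
    ext n
    obtain ⟨e1, e2, e3, e4, e5⟩ := hv n
    rw [hH, hD, ← htr n]
    simp only [hB, sub_eq_add_neg, add_assoc]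
    norm_num [e1, e2, e3, e4, e5]
    ring
  constructor
  · intro x y hxy
    exact hDb.1 (by rw [← hBH, ← hBH, hxy])
  · intro y
    obtain ⟨x, hx⟩ := hDb.2 y
    exact ⟨B x, by rw [hHB, hx]⟩

/-! ### Instability of the finite sections -/

/-- The solution of `yₙ₊₁ + yₙ₋₁ + v(n) yₙ = 0` for `n ≥ 0` with `y₋₁ = 0` and `y₀ = 1`. -/
def schSol (v : ℤ → ℝ) : ℕ → ℂ
  | 0 => 1
  | 1 => -v 0
  | n + 2 => -v (n + 1) * schSol v (n + 1) - schSol v n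

lemma schSol_period (v : ℤ → ℝ) (a : ℝ) (ha : a ^ 2 = 1 / 2)
    (hper : ∀ n : ℤ, v (n + 5) = v n)
    (h0 : v 0 = a) (h1 : v 1 = a) (h2 : v 2 = 0) (h3 : v 3 = a) (h4 : v 4 = 0) (k : ℕ) :
    schSol v (5 * k) = (-a) ^ k ∧ schSol v (5 * k + 1) = (-a) ^ (k + 1) := by
  have hac : (a : ℂ) ^ 2 = 1 / 2 := by rw [← Complex.ofReal_pow, ha]; norm_num
  have hv : ∀ (k : ℕ) (r : ℤ), v (5 * k + r) = v r := fun k r => by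
    have hp : Function.Periodic v 5 := hper
    have := hp.int_mul k r
    rw [← this]; congr 1; push_cast; ring
  induction k with
  | zero => simp [schSol, h0]
  | succ k ih =>
    obtain ⟨ih0, ih1⟩ := ih
    have step : ∀ r : ℕ, schSol v (5 * k + r + 2) =
        -v (r + 1) * schSol v (5 * k + r + 1) - schSol v (5 * k + r) := fun r => by
      rw [schSol, ← hv k (r + 1)]; push_cast; ring_nf
    have s2 := step 0
    have s3 := step 1
    have s4 := step 2
    have s5 := step 3
    have s6 := step 4
    have h5 : v 5 = a := by rw [← h0, ← hper 0]; norm_num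
    norm_num [h0, h1, h2, h3, h4, h5, ih0, ih1] at s2 s3 s4 s5 s6
    have e2 : schSol v (5 * k + 2) = -(1 / 2) * (-a) ^ k := by
      rw [s2, pow_succ]; linear_combination (-a : ℂ) ^ k * hac
    have e4 : schSol v (5 * k + 4) = 0 := by
      rw [s4, s3, e2, pow_succ]; linear_combination -(-a : ℂ) ^ k * hac
    have e5 : schSol v (5 * k + 5) = (-a) ^ (k + 1) := by
      rw [s5, s3, neg_neg]
    refine ⟨e5, ?_⟩
    rw [show 5 * (k + 1) + 1 = 5 * k + 6 by ring, s6, e5, e4]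
    ring

lemma schFinSec_mulVec (v : ℤ → ℝ) (hper : ∀ n : ℤ, v (n + 5) = v n) (m : ℕ)
    (i : Fin (2 * (5 * m) + 1)) :
    (schFinSec v (5 * m) *ᵥ fun j => schSol v j) i =
      if (i : ℕ) = 2 * (5 * m) then -schSol v (2 * (5 * m) + 1) else 0 := by
  have hv : v ((i : ℕ) - (5 * m : ℕ) : ℤ) = v (i : ℕ) := by
    have hp : Function.Periodic v 5 := hper
    have := hp.sub_int_mul_eq (x := ((i : ℕ) : ℤ)) m
    rw [← this]; congr 1; push_cast; ring
  obtain ⟨i, hi⟩ := i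
  simp only at hv
  have hent : ∀ j : Fin (2 * (5 * m) + 1),
      schFinSec v (5 * m) ⟨i, hi⟩ j * schSol v j =
        (if (j : ℕ) = i then v i * schSol v i else 0) +
        (if (j : ℕ) = i + 1 then schSol v (i + 1) else 0) +
        (if (j : ℕ) + 1 = i then schSol v j else 0) := fun j => by
    obtain ⟨j, hj⟩ := j
    simp only [schFinSec, of_apply]
    rcases lt_trichotomy i j with h | h | h
    · have h1 : ¬ ((i : ℤ) = j) := by omega
      have h2 : ¬ (j = i) := by omega
      have h3 : ¬ (j + 1 = i) := by omega
      by_cases h4 : j = i + 1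
      · subst h4; simp; omega
      · have h5 : ¬ ((i : ℤ) = j + 1 ∨ (j : ℤ) = i + 1) := by omega
        simp [h1, h2, h3, h4, h5]
    · subst h; simp only [hv]; simp
    · have h1 : ¬ ((i : ℤ) = j) := by omega
      have h2 : ¬ (j = i) := by omega
      have h3 : ¬ (j = i + 1) := by omega
      by_cases h4 : j + 1 = i
      · subst h4; simp; omega
      · have h5 : ¬ ((i : ℤ) = j + 1 ∨ (j : ℤ) = i + 1) := by omega
        simp [h1, h2, h3, h4, h5]
  simp only [mulVec, dotProduct, hent]
  rw [Fin.sum_univ_eq_sum_range (fun j => (if j = i then v i * schSol v i else 0) +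
        (if j = i + 1 then schSol v (i + 1) else 0) +
        (if j + 1 = i then schSol v j else 0)) (2 * (5 * m) + 1),
    Finset.sum_add_distrib, Finset.sum_add_distrib, Finset.sum_ite_eq', Finset.sum_ite_eq',
    if_pos (Finset.mem_range.2 hi)]
  -- The recursion, with `y₋₁ = 0` accounting for the first row.
  have hrec : v i * schSol v i + schSol v (i + 1) +
      ∑ j ∈ Finset.range (2 * (5 * m) + 1), (if j + 1 = i then schSol v j else 0) = 0 := by
    cases i with
    | zero => simp [schSol]
    | succ i =>
      simp only [add_left_inj, Finset.sum_ite_eq']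
      rw [if_pos (Finset.mem_range.2 (by omega)), schSol]
      push_cast
      ring
  by_cases hl : i = 2 * (5 * m)
  · subst hl
    rw [if_neg (by simp), if_pos rfl]
    linear_combination hrec
  · rw [if_pos (Finset.mem_range.2 (by omega)), if_neg hl, hrec]

/-- the `5`-periodic Schrödinger operator with potential repeating
`(1/√2, 1/√2, 0, 1/√2, 0)` is bijective, but its finite sections are not stable; in
particular, this operator is not FSM-simple. -/
theorem stmt18 (v : ℤ → ℝ)
    (hper : ∀ n : ℤ, v (n + 5) = v n)
    (h0 : v 0 = 1 / Real.sqrt 2) (h1 : v 1 = 1 / Real.sqrt 2) (h2 : v 2 = 0)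
    (h3 : v 3 = 1 / Real.sqrt 2) (h4 : v 4 = 0)
    (H : lp (fun _ : ℤ => ℂ) 2 →L[ℂ] lp (fun _ : ℤ => ℂ) 2)
    (hH : ∀ x : lp (fun _ : ℤ => ℂ) 2, ∀ n : ℤ,
      H x n = x (n + 1) + x (n - 1) + (v n : ℂ) * x n) :
    Function.Bijective H ∧
      ∀ n₀ : ℕ, ∀ C : ℝ, 0 < C → ∃ n : ℕ, n₀ ≤ n ∧
        (¬ IsUnit (schFinSec v n) ∨
          C < ‖Matrix.toEuclideanCLM (𝕜 := ℂ) ((schFinSec v n)⁻¹)‖) := by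
  have hs : Real.sqrt 2 ^ 2 = 2 := Real.sq_sqrt (by norm_num)
  have hspos : 0 < Real.sqrt 2 := by positivity
  generalize ha' : 1 / Real.sqrt 2 = a at h0 h1 h3
  have hapos : 0 < a := by rw [← ha']; positivity
  have ha : a ^ 2 = 1 / 2 := by rw [← ha', div_pow, hs]; norm_num
  refine ⟨bijective_of_periodic v a (by nlinarith) hper h0 h1 h2 h3 h4 H hH, ?_⟩
  intro n₀ C hC
  have ha1 : a < 1 := by nlinarith
  obtain ⟨m₀, hm₀⟩ := exists_pow_lt_of_lt_one (inv_pos.2 hC) ha1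
  refine ⟨5 * (n₀ + m₀), by omega, ?_⟩
  set m := n₀ + m₀ with hm
  rw [or_iff_not_imp_left, not_not]
  intro hu
  set A := schFinSec v (5 * m) with hA
  set y : Fin (2 * (5 * m) + 1) → ℂ := fun j => schSol v j with hy
  set r : ℂ := -schSol v (2 * (5 * m) + 1) with hr
  have hAy : A *ᵥ y = Pi.single (Fin.last _) r := by
    ext i
    rw [hA, hy, schFinSec_mulVec v hper, Pi.single_apply]
    simp [Fin.ext_iff, hr]
  have hinv : A⁻¹ *ᵥ (Pi.single (Fin.last _) r) = y := by
    rw [← hAy, mulVec_mulVec, nonsing_inv_mul _ ((isUnit_iff_isUnit_det _).1 hu), one_mulVec]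
  have hrn : ‖r‖ = a ^ (2 * m + 1) := by
    have := (schSol_period v a ha hper h0 h1 h2 h3 h4 (2 * m)).2
    rw [hr, show 2 * (5 * m) + 1 = 5 * (2 * m) + 1 by ring, this, norm_neg, norm_pow, norm_neg,
      Complex.norm_real, Real.norm_of_nonneg hapos.le]
  have hle := (toEuclideanCLM (𝕜 := ℂ) A⁻¹).le_opNorm
    (WithLp.toLp 2 (Pi.single (Fin.last _) r))
  rw [toEuclideanCLM_toLp, hinv] at hle
  have hone : 1 ≤ ‖WithLp.toLp 2 y‖ := by
    have := PiLp.norm_apply_le (WithLp.toLp 2 y) 0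
    simpa [hy, schSol] using this
  have hsn : ‖(WithLp.toLp 2 (Pi.single (Fin.last _) r) :
      EuclideanSpace ℂ (Fin (2 * (5 * m) + 1)))‖ = a ^ (2 * m + 1) := by
    rw [← hrn]; exact PiLp.norm_single 2 (fun _ => ℂ) _ _
  rw [hsn] at hle
  have hpow : a ^ (2 * m + 1) ≤ a ^ m₀ := pow_le_pow_of_le_one hapos.le ha1.le (by omega)
  have hlt : C * a ^ (2 * m + 1) < 1 := by
    calc C * a ^ (2 * m + 1) < C * C⁻¹ := by gcongr; exact hpow.trans_lt hm₀
      _ = 1 := mul_inv_cancel₀ hC.ne'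
  have hp : 0 < a ^ (2 * m + 1) := by positivity
  by_contra! hcon
  have : ‖toEuclideanCLM (𝕜 := ℂ) A⁻¹‖ * a ^ (2 * m + 1) ≤ C * a ^ (2 * m + 1) := by gcongr
  linarith
end
end
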